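/- For the Weierstrass ℘-function with period lattice L_ω = ω·ℤ[τ] satisfying ℘′(z)² = 4℘(z)³ − 1, one has ℘(ω/6, L_ω) = 1 + ∛2 + ∛4. -/

import Mathlib

noncomputable section

open Complex Real ComplexConjugate

/-- `τ = (−1+√−3)/2`, a primitive cube root of unity. -/
def tau : ℂ := (-1 + Real.sqrt 3 * Complex.I) / 2

/-- `√−3 = 1 + 2τ`, the square root of `−3` with positive imaginary part. -/
def sqrtm3 : ℂ := Real.sqrt 3 * Complex.I

/-- The ring of integers `O_K = ℤ[τ]` of `K = ℚ(√−3)`, as a subring of `ℂ`. -/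
def Eis : Subring ℂ := Subring.closure {tau}

/-- `τ` as an element of `ℤ[τ]`. -/
def tauO : Eis := ⟨tau, Subring.subset_closure rfl⟩

/-- `√−3` as an element of `ℤ[τ]`. -/
def sqrtm3O : Eis := 1 + 2 * tauO

/-- Membership in the lattice `L_ω = ω·ℤ[τ]`. -/
def inLattice (ω : ℝ) (z : ℂ) : Prop := ∃ a : Eis, z = (ω : ℂ) * a

/-- The Weierstrass `℘`-function of the lattice `L_ω = ω·ℤ[τ]`. -/
def wp (ω : ℝ) (z : ℂ) : ℂ :=
  1 / z ^ 2 + ∑' a : {w : ℂ // inLattice ω w ∧ w ≠ 0},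
    (1 / (z - (a : ℂ)) ^ 2 - 1 / (a : ℂ) ^ 2)

/-- The Weierstrass `ζ`-function of the lattice `L_ω = ω·ℤ[τ]`. -/
def wzeta (ω : ℝ) (z : ℂ) : ℂ :=
  1 / z + ∑' a : {w : ℂ // inLattice ω w ∧ w ≠ 0},
    (1 / (z - (a : ℂ)) + 1 / (a : ℂ) + z / (a : ℂ) ^ 2)

/-- The real cube root of 2, as a complex number. -/
def cbrt2 : ℂ := ((2 : ℝ) ^ ((1 : ℝ) / 3) : ℝ)

/-- The real cube root of 4, as a complex number. -/
def cbrt4 : ℂ := ((4 : ℝ) ^ ((1 : ℝ) / 3) : ℝ)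

/-!
For fixed `c`, the chord through the points of parameters `t` and `c - t` of the Weierstrass curve
has a third intersection point, whose abscissa has derivative zero in `t` by the differential
equation of `℘`. It tends to `℘(c)` as `t → 0`, which is the addition theorem; letting `t` tend to
`c / 2` turns it into the duplication formula. A point of order three satisfies `℘(2z) = ℘(z)`,
whence the three-division polynomial.

Multiplication by `τ` preserves `L_ω`, which forces `g₂ = 0`, while `g₃ = 1` is the differential
equation. Since `℘` and its derivative are real on the real line, the division polynomial
`48(x⁴ - x)` leaves only `℘(ω/3) = 1`, and duplication yields `(a - 1)(a³ - 3a² - 3a - 1) = 0` for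
`a = ℘(ω/6)`. If `a` were `1`, then `℘` would agree at `ω/3` and `ω/6`, and the addition theorem
would make its derivative vanish at `ω/3`. The cubic is `2a³ = (a + 1)³`, whose real root is
`1 + ∛2 + ∛4`.
-/

section PuncturedNeighborhoods
open Filter Topology

variable {E : Type*} [NormedAddCommGroup E] [NormedSpace ℂ E] {f : ℂ → E} {x : ℂ}

lemma eventually_eq_of_hasDerivAt_zero_of_tendsto [CompleteSpace E] {y : E}
    (hf : ∀ᶠ z in 𝓝[≠] x, HasDerivAt f 0 z) (hlim : Tendsto f (𝓝[≠] x) (𝓝 y)) :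
    ∀ᶠ z in 𝓝[≠] x, f z = y := by
  set g : ℂ → E := Function.update f x y
  have hg : ∀ᶠ z in 𝓝[≠] x, HasDerivAt g 0 z := by
    filter_upwards [hf, self_mem_nhdsWithin] with z hz hzx
    exact hz.congr_of_eventuallyEq <|
      (eventually_ne_nhds hzx).mono fun t ht ↦ Function.update_of_ne ht _ _
  have hgx : AnalyticAt ℂ g x :=
    Complex.analyticAt_of_differentiable_on_punctured_nhds_of_continuousAt
      (hg.mono fun _ hz ↦ hz.differentiableAt) (continuousAt_update_same.mpr hlim)
  have hderiv : ∀ᶠ z in 𝓝 x, deriv g z = 0 :=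
    hgx.deriv.frequently_zero_iff_eventually_zero.mp (hg.mono fun _ hz ↦ hz.deriv).frequently
  obtain ⟨r, hr, hball⟩ :=
    Metric.eventually_nhds_iff_ball.mp (hderiv.and hgx.eventually_analyticAt)
  filter_upwards [nhdsWithin_le_nhds (Metric.ball_mem_nhds x hr), self_mem_nhdsWithin]
    with z hz hzx
  have hconst : g z = g x :=
    Metric.isOpen_ball.is_const_of_deriv_eq_zero Metric.isPreconnected_ball
      (fun t ht ↦ (hball t ht).2.differentiableAt.differentiableWithinAt)
      (fun t ht ↦ (hball t ht).1) hz (Metric.mem_ball_self hr)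
  rwa [show g z = f z from Function.update_of_ne hzx _ _,
    show g x = y from Function.update_self ..] at hconst

lemma eqOn_zero_of_eventually_nhdsNE {U : Set ℂ} (hf : AnalyticOnNhd ℂ f U)
    (hU : IsPreconnected U) (hxU : ∀ᶠ z in 𝓝[≠] x, z ∈ U) (hx : ∀ᶠ z in 𝓝[≠] x, f z = 0) :
    Set.EqOn f 0 U := by
  obtain ⟨z, hzU, hz, hzx⟩ :=
    (hxU.and ((eventually_eventually_nhdsWithin.mpr hx).and self_mem_nhdsWithin)).exists
  rw [isOpen_compl_singleton.nhdsWithin_eq hzx] at hz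
  exact hf.eqOn_zero_of_preconnected_of_eventuallyEq_zero hU hzU hz

lemma sq_eq_mul_sq_of_hasDerivAt {𝕜 : Type*} [NontriviallyNormedField 𝕜] {f g h : 𝕜 → 𝕜}
    {f' g' a x : 𝕜} (hf : HasDerivAt f f' x) (hg : HasDerivAt g g' x) (hfx : f x = 0)
    (hgx : g x = 0) (hh : Tendsto h (𝓝[≠] x) (𝓝 a))
    (hfgh : ∀ᶠ t in 𝓝[≠] x, f t ^ 2 = h t * g t ^ 2) : f' ^ 2 = a * g' ^ 2 := by
  refine tendsto_nhds_unique_of_eventuallyEq (hf.tendsto_slope.pow 2)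
    (hh.mul (hg.tendsto_slope.pow 2)) ?_
  filter_upwards [hfgh] with t ht
  simp only [slope_def_field, hfx, hgx, sub_zero, div_pow, ht, mul_div_assoc]

end PuncturedNeighborhoods

section PeriodLattice
open Filter Topology

variable (L : PeriodPair)

lemma countable_lattice : (L.lattice : Set ℂ).Countable :=
  Set.countable_coe_iff.mp (countable_of_Lindelof_of_discrete (X := L.lattice))

lemma isPreconnected_compl_of_countable {s : Set ℂ} (hs : s.Countable) : IsPreconnected sᶜ :=
  (hs.isConnected_compl_of_one_lt_rank (by simp)).isPreconnected

variable {L}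

lemma eventually_notMem_lattice {z : ℂ} (hz : z ∉ L.lattice) : ∀ᶠ t in 𝓝 z, t ∉ L.lattice :=
  L.isClosed_lattice.isOpen_compl.mem_nhds hz

variable (L)

lemma eventually_notMem_lattice_nhdsNE_zero : ∀ᶠ t in 𝓝[≠] (0 : ℂ), t ∉ L.lattice := by
  filter_upwards [nhdsWithin_le_nhds (L.compl_lattice_sdiff_singleton_mem_nhds 0),
    self_mem_nhdsWithin] with t ht ht0 htL
  exact ht ⟨htL, ht0⟩

lemma ω₁_div_natCast_notMem_lattice {n : ℕ} (hn : 1 < n) : L.ω₁ / n ∉ L.lattice := by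
  have h := (L.mul_ω₁_add_mul_ω₂_mem_lattice (α := (n : ℚ)⁻¹) (β := 0)).not.mpr fun h ↦ hn.ne' <| by
    simpa only [Rat.inv_natCast_den_of_pos (zero_lt_one.trans hn)] using h.1
  simpa [inv_mul_eq_div] using h

end PeriodLattice

section LaurentExpansion
open Filter Topology
open scoped PeriodPair

variable (L : PeriodPair)

lemma weierstrassP_eq_inv_sq_add (z : ℂ) :
    ℘[L] z = 1 / z ^ 2 + L.weierstrassPExcept 0 z := by
  simpa [add_comm] using (L.weierstrassPExcept_add 0 z).symm

lemma derivWeierstrassP_eq_neg_two_div_cube_add (z : ℂ) :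
    L.derivWeierstrassP z = -2 / z ^ 3 + L.derivWeierstrassPExcept 0 z := by
  simpa [neg_div, neg_add_eq_sub] using (L.derivWeierstrassPExcept_sub 0 z).symm

lemma tendsto_weierstrassPExcept_zero :
    Tendsto (L.weierstrassPExcept 0) (𝓝[≠] 0) (𝓝 0) := by
  simpa using ((L.analyticAt_weierstrassPExcept 0).continuousAt.tendsto).mono_left
    (nhdsWithin_le_nhds (s := {0}ᶜ))

lemma tendsto_derivWeierstrassPExcept_zero :
    Tendsto (L.derivWeierstrassPExcept 0) (𝓝[≠] 0) (𝓝 0) := by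
  simpa using ((L.analyticAt_derivWeierstrassPExcept 0).continuousAt.tendsto).mono_left
    (nhdsWithin_le_nhds (s := {0}ᶜ))

lemma tendsto_sq_mul_weierstrassP_sub {f : ℂ → ℂ} {a : ℂ} (hf : Tendsto f (𝓝[≠] 0) (𝓝 a)) :
    Tendsto (fun t ↦ t ^ 2 * (℘[L] t - f t)) (𝓝[≠] 0) (𝓝 1) := by
  have hid : Tendsto (fun t : ℂ ↦ t) (𝓝[≠] 0) (𝓝 0) := nhdsWithin_le_nhds
  have hlim : Tendsto (fun t ↦ 1 + t ^ 2 * (L.weierstrassPExcept 0 t - f t)) (𝓝[≠] 0) (𝓝 1) := by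
    simpa using ((hid.pow 2).mul ((tendsto_weierstrassPExcept_zero L).sub hf)).const_add 1
  refine hlim.congr' ?_
  filter_upwards [self_mem_nhdsWithin] with t (ht : t ≠ 0)
  rw [weierstrassP_eq_inv_sq_add]
  field_simp
  ring

lemma tendsto_cube_mul_derivWeierstrassP :
    Tendsto (fun t ↦ t ^ 3 * L.derivWeierstrassP t) (𝓝[≠] 0) (𝓝 (-2)) := by
  have hid : Tendsto (fun t : ℂ ↦ t) (𝓝[≠] 0) (𝓝 0) := nhdsWithin_le_nhds
  have hlim : Tendsto (fun t ↦ -2 + t ^ 3 * L.derivWeierstrassPExcept 0 t)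
      (𝓝[≠] 0) (𝓝 (-2)) := by
    simpa using ((hid.pow 3).mul (tendsto_derivWeierstrassPExcept_zero L)).const_add (-2)
  refine hlim.congr' ?_
  filter_upwards [self_mem_nhdsWithin] with t (ht : t ≠ 0)
  rw [derivWeierstrassP_eq_neg_two_div_cube_add]
  field_simp

lemma eventually_derivWeierstrassP_ne_zero :
    ∀ᶠ t in 𝓝[≠] 0, L.derivWeierstrassP t ≠ 0 :=
  ((tendsto_cube_mul_derivWeierstrassP L).eventually_ne (neg_ne_zero.mpr two_ne_zero)).mono
    fun _ ht ↦ right_ne_zero_of_mul ht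

end LaurentExpansion

section DifferentialEquation
open Filter Topology
open scoped PeriodPair

variable {L : PeriodPair} {z : ℂ}

lemma hasDerivAt_weierstrassP (hz : z ∉ L.lattice) :
    HasDerivAt ℘[L] (L.derivWeierstrassP z) z := by
  rw [← L.deriv_weierstrassP]
  exact (L.analyticOnNhd_weierstrassP z hz).differentiableAt.hasDerivAt

lemma derivWeierstrassP_mul_deriv_sub_eq_zero (hz : z ∉ L.lattice) :
    L.derivWeierstrassP z *
      (deriv L.derivWeierstrassP z - (6 * ℘[L] z ^ 2 - L.g₂ / 2)) = 0 := by
  have hP := hasDerivAt_weierstrassP hz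
  have hsq := (L.analyticOnNhd_derivWeierstrassP z hz).differentiableAt.hasDerivAt.fun_pow 2
  have hcubic := (((hP.fun_pow 3).const_mul 4).sub (hP.const_mul L.g₂)).sub_const L.g₃
  have heq : (fun t ↦ L.derivWeierstrassP t ^ 2) =ᶠ[𝓝 z]
      fun t ↦ 4 * ℘[L] t ^ 3 - L.g₂ * ℘[L] t - L.g₃ :=
    (eventually_notMem_lattice hz).mono fun t ht ↦ L.derivWeierstrassP_sq t ht
  have h := hsq.unique (hcubic.congr_of_eventuallyEq heq)
  norm_num at h
  linear_combination h / 2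

lemma hasDerivAt_derivWeierstrassP (hz : z ∉ L.lattice) :
    HasDerivAt L.derivWeierstrassP (6 * ℘[L] z ^ 2 - L.g₂ / 2) z := by
  have hP' := L.analyticOnNhd_derivWeierstrassP
  have hzero : Set.EqOn
      (fun t ↦ deriv L.derivWeierstrassP t - (6 * ℘[L] t ^ 2 - L.g₂ / 2)) 0
      (L.lattice : Set ℂ)ᶜ := by
    refine eqOn_zero_of_eventually_nhdsNE (x := 0)
      (hP'.deriv.sub ((analyticOnNhd_const.mul (L.analyticOnNhd_weierstrassP.pow 2)).sub
        analyticOnNhd_const))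
      (isPreconnected_compl_of_countable (countable_lattice L))
      (eventually_notMem_lattice_nhdsNE_zero L) ?_
    filter_upwards [eventually_notMem_lattice_nhdsNE_zero L,
      eventually_derivWeierstrassP_ne_zero L] with t ht ht'
    exact (mul_eq_zero.mp (derivWeierstrassP_mul_deriv_sub_eq_zero ht)).resolve_left ht'
  rw [← sub_eq_zero.mp (hzero hz)]
  exact (hP' z hz).differentiableAt.hasDerivAt

end DifferentialEquation

section AdditionTheorem
open Filter Topology
open scoped PeriodPair

variable (L : PeriodPair)

/-- The abscissa of the third intersection point of the curve `y² = 4x³ - g₂x - g₃` with the chord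
through the points of parameters `t` and `c - t`. The addition theorem says that it is `℘(c)`. -/
def chordAbscissa (c t : ℂ) : ℂ :=
  ((L.derivWeierstrassP t - L.derivWeierstrassP (c - t)) / (℘[L] t - ℘[L] (c - t))) ^ 2 / 4
    - ℘[L] t - ℘[L] (c - t)

variable {L} {c t z w : ℂ}

lemma hasDerivAt_weierstrassP_sub_weierstrassP_const_sub (ht : t ∉ L.lattice)
    (hct : c - t ∉ L.lattice) :
    HasDerivAt (fun s ↦ ℘[L] s - ℘[L] (c - s))
      (L.derivWeierstrassP t + L.derivWeierstrassP (c - t)) t := by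
  simpa using! (hasDerivAt_weierstrassP ht).sub ((hasDerivAt_weierstrassP hct).comp_const_sub c t)

lemma hasDerivAt_derivWeierstrassP_sub_derivWeierstrassP_const_sub (ht : t ∉ L.lattice)
    (hct : c - t ∉ L.lattice) :
    HasDerivAt (fun s ↦ L.derivWeierstrassP s - L.derivWeierstrassP (c - s))
      (6 * ℘[L] t ^ 2 + 6 * ℘[L] (c - t) ^ 2 - L.g₂) t := by
  convert! (hasDerivAt_derivWeierstrassP ht).sub
    ((hasDerivAt_derivWeierstrassP hct).comp_const_sub c t) using 1
  ring

lemma hasDerivAt_chordAbscissa (ht : t ∉ L.lattice) (hct : c - t ∉ L.lattice)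
    (hne : ℘[L] t ≠ ℘[L] (c - t)) : HasDerivAt (chordAbscissa L c) 0 t := by
  have hN := hasDerivAt_derivWeierstrassP_sub_derivWeierstrassP_const_sub ht hct
  have hD := hasDerivAt_weierstrassP_sub_weierstrassP_const_sub ht hct
  have hne' := sub_ne_zero.mpr hne
  have hF := ((((hN.fun_div hD hne').fun_pow 2).div_const 4).sub (hasDerivAt_weierstrassP ht)).sub
    ((hasDerivAt_weierstrassP hct).comp_const_sub c t)
  refine hF.congr_deriv ?_
  have hode := L.derivWeierstrassP_sq t ht
  have hode' := L.derivWeierstrassP_sq (c - t) hct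
  generalize ℘[L] t = x at *
  generalize ℘[L] (c - t) = x' at *
  generalize L.derivWeierstrassP t = y at *
  generalize L.derivWeierstrassP (c - t) = y' at *
  have hcube : (6 * x ^ 2 + 6 * x' ^ 2 - L.g₂) * (x - x') - (y - y') * (y + y')
      = 2 * (x - x') ^ 3 := by
    linear_combination hode' - hode
  simp only [Nat.cast_ofNat, Nat.add_one_sub_one, pow_one, hcube]
  field_simp
  ring

lemma tendsto_const_sub_nhdsNE_zero (c : ℂ) : Tendsto (fun t ↦ c - t) (𝓝[≠] 0) (𝓝 c) := by
  simpa using (tendsto_id.const_sub c).mono_left (nhdsWithin_le_nhds (a := (0 : ℂ)))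

lemma eventually_const_sub_notMem_lattice (hc : c ∉ L.lattice) :
    ∀ᶠ t in 𝓝[≠] 0, c - t ∉ L.lattice :=
  (tendsto_const_sub_nhdsNE_zero c).eventually (eventually_notMem_lattice hc)

lemma tendsto_weierstrassP_const_sub (hc : c ∉ L.lattice) :
    Tendsto (fun t ↦ ℘[L] (c - t)) (𝓝[≠] 0) (𝓝 (℘[L] c)) :=
  (hasDerivAt_weierstrassP hc).continuousAt.tendsto.comp (tendsto_const_sub_nhdsNE_zero c)

lemma tendsto_derivWeierstrassP_const_sub (hc : c ∉ L.lattice) :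
    Tendsto (fun t ↦ L.derivWeierstrassP (c - t)) (𝓝[≠] 0) (𝓝 (L.derivWeierstrassP c)) :=
  (hasDerivAt_derivWeierstrassP hc).continuousAt.tendsto.comp (tendsto_const_sub_nhdsNE_zero c)

lemma eventually_weierstrassP_ne_weierstrassP_const_sub (hc : c ∉ L.lattice) :
    ∀ᶠ t in 𝓝[≠] 0, ℘[L] t ≠ ℘[L] (c - t) :=
  ((tendsto_sq_mul_weierstrassP_sub L (tendsto_weierstrassP_const_sub hc)).eventually_ne
    one_ne_zero).mono fun _ ht ↦ sub_ne_zero.mp (right_ne_zero_of_mul ht)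

-- The principal parts `-2 / t ^ 3` and `1 / t ^ 2` cancel, leaving only terms with finite limits.
lemma chordAbscissa_eq_of_ne (ht : t ≠ 0) (hne : ℘[L] t ≠ ℘[L] (c - t)) :
    letI A := L.derivWeierstrassPExcept 0 t - L.derivWeierstrassP (c - t)
    letI B := L.weierstrassPExcept 0 t - ℘[L] (c - t)
    chordAbscissa L c t =
      (A ^ 2 * t ^ 4 / 4 - A * t - 2 * B - B ^ 2 * t ^ 2) / (t ^ 2 * (℘[L] t - ℘[L] (c - t))) ^ 2
        - L.weierstrassPExcept 0 t - ℘[L] (c - t) := by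
  have hne' := sub_ne_zero.mpr hne
  have hE : L.weierstrassPExcept 0 t = ℘[L] t - 1 / t ^ 2 :=
    eq_sub_of_add_eq' (weierstrassP_eq_inv_sq_add L t).symm
  rw [chordAbscissa, derivWeierstrassP_eq_neg_two_div_cube_add L t, hE]
  field_simp
  ring

lemma tendsto_chordAbscissa (hc : c ∉ L.lattice) :
    Tendsto (chordAbscissa L c) (𝓝[≠] 0) (𝓝 (℘[L] c)) := by
  have hid : Tendsto (fun t : ℂ ↦ t) (𝓝[≠] 0) (𝓝 0) := nhdsWithin_le_nhds
  have hP := tendsto_weierstrassP_const_sub hc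
  have hE := tendsto_weierstrassPExcept_zero L
  have hA := (tendsto_derivWeierstrassPExcept_zero L).sub (tendsto_derivWeierstrassP_const_sub hc)
  have hB := hE.sub hP
  have hnum := (((((hA.pow 2).mul (hid.pow 4)).div_const 4).sub (hA.mul hid)).sub
    (hB.const_mul 2)).sub ((hB.pow 2).mul (hid.pow 2))
  have hden := (tendsto_sq_mul_weierstrassP_sub L hP).pow 2
  have hlim := ((hnum.div hden (by norm_num)).sub hE).sub hP
  have hval : ((0 - L.derivWeierstrassP c) ^ 2 * 0 ^ 4 / 4 - (0 - L.derivWeierstrassP c) * 0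
      - 2 * (0 - ℘[L] c) - (0 - ℘[L] c) ^ 2 * 0 ^ 2) / 1 ^ 2 - 0 - ℘[L] c = ℘[L] c := by
    ring
  rw [hval] at hlim
  refine hlim.congr' ?_
  filter_upwards [eventually_weierstrassP_ne_weierstrassP_const_sub hc, self_mem_nhdsWithin]
    with t hne ht
  exact (chordAbscissa_eq_of_ne ht hne).symm

lemma eventually_chordAbscissa_eq (hc : c ∉ L.lattice) :
    ∀ᶠ t in 𝓝[≠] 0, chordAbscissa L c t = ℘[L] c := by
  refine eventually_eq_of_hasDerivAt_zero_of_tendsto ?_ (tendsto_chordAbscissa hc)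
  filter_upwards [eventually_notMem_lattice_nhdsNE_zero L, eventually_const_sub_notMem_lattice hc,
    eventually_weierstrassP_ne_weierstrassP_const_sub hc] with t ht hct hne
  exact hasDerivAt_chordAbscissa ht hct hne

lemma eventually_weierstrassP_add_const_sub (hc : c ∉ L.lattice) :
    ∀ᶠ t in 𝓝[≠] 0, (L.derivWeierstrassP t - L.derivWeierstrassP (c - t)) ^ 2
      - 4 * (℘[L] t - ℘[L] (c - t)) ^ 2 * (℘[L] t + ℘[L] (c - t) + ℘[L] c) = 0 := by
  filter_upwards [eventually_chordAbscissa_eq hc,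
    eventually_weierstrassP_ne_weierstrassP_const_sub hc] with t ht hne
  have hne' := sub_ne_zero.mpr hne
  rw [← ht, chordAbscissa]
  field_simp
  ring

-- Without denominators the identity is analytic also where `℘(t) = ℘(c - t)`, so that it extends
-- from a neighborhood of `0` by the identity theorem.
theorem weierstrassP_add (hz : z ∉ L.lattice) (hw : w ∉ L.lattice) (hzw : z + w ∉ L.lattice) :
    (L.derivWeierstrassP z - L.derivWeierstrassP w) ^ 2
      = 4 * (℘[L] z - ℘[L] w) ^ 2 * (℘[L] z + ℘[L] w + ℘[L] (z + w)) := by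
  set c := z + w
  set U : Set ℂ := (L.lattice ∪ (c - ·) ⁻¹' L.lattice)ᶜ
  have hmem {t : ℂ} : t ∈ U ↔ t ∉ L.lattice ∧ c - t ∉ L.lattice := by simp [U]
  have hU : IsPreconnected U := isPreconnected_compl_of_countable <|
    (countable_lattice L).union ((countable_lattice L).preimage sub_right_injective)
  have hsub : AnalyticOnNhd ℂ (c - ·) U := analyticOnNhd_const.sub analyticOnNhd_id
  have hP : AnalyticOnNhd ℂ ℘[L] U := L.analyticOnNhd_weierstrassP.mono fun t ht ↦ (hmem.mp ht).1
  have hP' : AnalyticOnNhd ℂ L.derivWeierstrassP U :=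
    L.analyticOnNhd_derivWeierstrassP.mono fun t ht ↦ (hmem.mp ht).1
  have hPc : AnalyticOnNhd ℂ (fun t ↦ ℘[L] (c - t)) U :=
    L.analyticOnNhd_weierstrassP.comp hsub fun t ht ↦ (hmem.mp ht).2
  have hPc' : AnalyticOnNhd ℂ (fun t ↦ L.derivWeierstrassP (c - t)) U :=
    L.analyticOnNhd_derivWeierstrassP.comp hsub fun t ht ↦ (hmem.mp ht).2
  have hzero := eqOn_zero_of_eventually_nhdsNE (((hP'.sub hPc').pow 2).sub
      ((analyticOnNhd_const.mul ((hP.sub hPc).pow 2)).mul ((hP.add hPc).add analyticOnNhd_const)))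
    hU
    ((eventually_notMem_lattice_nhdsNE_zero L).and (eventually_const_sub_notMem_lattice hzw)
      |>.mono fun t ht ↦ hmem.mpr ht)
    (eventually_weierstrassP_add_const_sub hzw)
  have hcw : c - z = w := add_sub_cancel_left z w
  have hid := hzero (hmem.mpr ⟨hz, hcw ▸ hw⟩)
  simp only [Pi.sub_apply, Pi.pow_apply, Pi.add_apply, hcw] at hid
  exact sub_eq_zero.mp hid

end AdditionTheorem

section Consequences
open Filter Topology
open scoped PeriodPair

variable {L : PeriodPair} {z w : ℂ}

-- At `c = 2z` both sides of the addition theorem for `t` and `c - t` vanish to second order at `z`.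
theorem weierstrassP_two_mul (hz : 2 * z ∉ L.lattice) :
    (6 * ℘[L] z ^ 2 - L.g₂ / 2) ^ 2
      = 4 * L.derivWeierstrassP z ^ 2 * (2 * ℘[L] z + ℘[L] (2 * z)) := by
  have hself : 2 * z - z = z := by ring
  have hzL : z ∉ L.lattice := fun h ↦ hz (two_mul z ▸ add_mem h h)
  have hzL' : 2 * z - z ∉ L.lattice := hself.symm ▸ hzL
  have hP := (hasDerivAt_weierstrassP hzL).continuousAt
  have hPc := ((hasDerivAt_weierstrassP hzL').comp_const_sub (2 * z) z).continuousAt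
  have hlim := (((hP.add hPc).add_const (℘[L] (2 * z))).const_mul 4).tendsto.mono_left
    (nhdsWithin_le_nhds (s := {z}ᶜ))
  have hadd : ∀ᶠ t in 𝓝[≠] z, (L.derivWeierstrassP t - L.derivWeierstrassP (2 * z - t)) ^ 2
      = 4 * (℘[L] t + ℘[L] (2 * z - t) + ℘[L] (2 * z)) * (℘[L] t - ℘[L] (2 * z - t)) ^ 2 := by
    have hsub : ∀ᶠ t in 𝓝 z, 2 * z - t ∉ L.lattice :=
      (continuous_sub_left (2 * z)).continuousAt.eventually (eventually_notMem_lattice hzL')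
    filter_upwards [nhdsWithin_le_nhds (eventually_notMem_lattice hzL), nhdsWithin_le_nhds hsub]
      with t ht ht'
    have h := weierstrassP_add ht ht' (by rwa [add_sub_cancel])
    rw [add_sub_cancel] at h
    linear_combination h
  have h := sq_eq_mul_sq_of_hasDerivAt
    (hasDerivAt_derivWeierstrassP_sub_derivWeierstrassP_const_sub hzL hzL')
    (hasDerivAt_weierstrassP_sub_weierstrassP_const_sub hzL hzL')
    (by rw [hself, sub_self]) (by rw [hself, sub_self]) hlim hadd
  simp only [Pi.add_apply, hself] at h
  linear_combination h / 4

lemma weierstrassP_eq_of_add_mem_lattice (h : z + w ∈ L.lattice) : ℘[L] z = ℘[L] w := by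
  rw [← L.weierstrassP_neg w, ← L.weierstrassP_add_coe (-w) ⟨z + w, h⟩]
  congr 1
  simp

lemma derivWeierstrassP_eq_zero_of_weierstrassP_eq (hz : z ∉ L.lattice) (hw : w ∉ L.lattice)
    (hadd : z + w ∉ L.lattice) (hsub : z - w ∉ L.lattice) (h : ℘[L] z = ℘[L] w) :
    L.derivWeierstrassP z = 0 := by
  have hplus := weierstrassP_add hz hw hadd
  have hminus := weierstrassP_add (w := -w) hz (by rwa [neg_mem_iff])
    (by rwa [← sub_eq_add_neg])
  rw [L.weierstrassP_neg, L.derivWeierstrassP_neg] at hminus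
  rw [h, sub_self, zero_pow two_ne_zero, mul_zero, zero_mul] at hplus hminus
  linear_combination (pow_eq_zero_iff two_ne_zero).mp hplus / 2
    + (pow_eq_zero_iff two_ne_zero).mp hminus / 2

theorem weierstrassP_three_division (hz : z ∉ L.lattice) (hz3 : 3 * z ∈ L.lattice) :
    48 * ℘[L] z ^ 4 - 24 * L.g₂ * ℘[L] z ^ 2 - 48 * L.g₃ * ℘[L] z - L.g₂ ^ 2 = 0 := by
  have hz2 : 2 * z ∉ L.lattice := fun h ↦ hz <| by
    convert sub_mem hz3 h using 1
    ring
  have hdup := weierstrassP_two_mul hz2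
  rw [weierstrassP_eq_of_add_mem_lattice (z := 2 * z) (w := z) (by convert hz3 using 1; ring),
    L.derivWeierstrassP_sq z hz] at hdup
  linear_combination -4 * hdup

end Consequences

section LatticeSymmetries
open scoped PeriodPair

variable {L : PeriodPair}

lemma weierstrassP_conj (hL : ∀ l ∈ L.lattice, conj l ∈ L.lattice) (z : ℂ) :
    ℘[L] (conj z) = conj (℘[L] z) := by
  let e : L.lattice ≃ L.lattice :=
    { toFun l := ⟨conj l.1, hL l l.2⟩
      invFun l := ⟨conj l.1, hL l l.2⟩
      left_inv l := by simp
      right_inv l := by simp }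
  rw [PeriodPair.weierstrassP, PeriodPair.weierstrassP, Complex.conj_tsum, ← e.tsum_eq]
  simp [e]

lemma derivWeierstrassP_conj (hL : ∀ l ∈ L.lattice, conj l ∈ L.lattice) (z : ℂ) :
    L.derivWeierstrassP (conj z) = conj (L.derivWeierstrassP z) := by
  have hcomp : conj ∘ ℘[L] ∘ conj = ℘[L] := by
    funext t
    simp [weierstrassP_conj hL]
  have h := congrFun (deriv_conj_conj (f := ℘[L])) (conj z)
  simpa [hcomp] using h

lemma G_eq_zero_of_mul_mem_lattice_iff {ζ : ℂ} {n : ℕ} (hζ : ∀ l, ζ * l ∈ L.lattice ↔ l ∈ L.lattice)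
    (hn : ζ ^ n ≠ 1) : L.G n = 0 := by
  have hζ0 : ζ ≠ 0 := by
    rintro rfl
    exact L.ω₁_div_two_notMem_lattice ((hζ _).mp (by simp))
  let e : L.lattice ≃ L.lattice := (Equiv.mulLeft₀ ζ hζ0).subtypeEquiv fun l ↦ (hζ l).symm
  have hG : L.G n = (ζ ^ n)⁻¹ * L.G n := by
    conv_lhs => rw [PeriodPair.G, ← e.tsum_eq]
    rw [PeriodPair.G, ← tsum_mul_left]
    refine tsum_congr fun l ↦ ?_
    rw [← mul_inv, ← mul_pow]
    rfl
  have hfactor : (1 - (ζ ^ n)⁻¹) * L.G n = 0 := by linear_combination hG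
  exact (mul_eq_zero.mp hfactor).resolve_left (sub_ne_zero.mpr (inv_ne_one.mpr hn).symm)

lemma exists_ofReal_eq_weierstrassP (hL : ∀ l ∈ L.lattice, conj l ∈ L.lattice) (t : ℝ) :
    ∃ x : ℝ, ℘[L] t = x :=
  Complex.conj_eq_iff_real.mp (by rw [← weierstrassP_conj hL, Complex.conj_ofReal])

lemma exists_ofReal_eq_derivWeierstrassP (hL : ∀ l ∈ L.lattice, conj l ∈ L.lattice) (t : ℝ) :
    ∃ y : ℝ, L.derivWeierstrassP t = y :=
  Complex.conj_eq_iff_real.mp (by rw [← derivWeierstrassP_conj hL, Complex.conj_ofReal])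

end LatticeSymmetries

section RealPeriod
open scoped PeriodPair

variable {L : PeriodPair} {ω : ℝ}

lemma eq_one_add_rpow_add_rpow {a : ℝ} (ha : a ^ 3 = 3 * a ^ 2 + 3 * a + 1) :
    a = 1 + 2 ^ ((1 : ℝ) / 3) + 4 ^ ((1 : ℝ) / 3) := by
  set s : ℝ := 2 ^ ((1 : ℝ) / 3) with hs
  have hs3 : s ^ 3 = 2 := by
    rw [hs, ← Real.rpow_natCast, ← Real.rpow_mul zero_le_two]
    norm_num
  have hs2 : (4 : ℝ) ^ ((1 : ℝ) / 3) = s ^ 2 := by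
    rw [hs, Real.rpow_pow_comm zero_le_two]
    norm_num
  have hroot : a + 1 = s * a :=
    (Odd.strictMono_pow (R := ℝ) (by decide : Odd 3)).injective <| by
      linear_combination -ha - a ^ 3 * hs3
  rw [hs2]
  linear_combination -(1 + s + s ^ 2) * hroot - a * hs3

lemma weierstrassP_div_three (hL : ∀ l ∈ L.lattice, conj l ∈ L.lattice) (hg₂ : L.g₂ = 0)
    (hg₃ : L.g₃ = 1) (hω : (ω : ℂ) ∈ L.lattice) (hω3 : (ω / 3 : ℂ) ∉ L.lattice) :
    ℘[L] (ω / 3) = 1 := by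
  have hdiv := weierstrassP_three_division hω3 (by rwa [mul_div_cancel₀ _ three_ne_zero])
  have hode := L.derivWeierstrassP_sq _ hω3
  obtain ⟨x, hx⟩ := exists_ofReal_eq_weierstrassP hL (ω / 3)
  obtain ⟨y, hy⟩ := exists_ofReal_eq_derivWeierstrassP hL (ω / 3)
  push_cast at hx hy
  rw [hx, hg₂, hg₃] at hdiv
  rw [hx, hy, hg₂, hg₃] at hode
  have hx4 : x * (x - 1) * (x ^ 2 + x + 1) = 0 := by
    apply Complex.ofReal_injective
    push_cast
    linear_combination hdiv / 48
  have hy2 : y ^ 2 = 4 * x ^ 3 - 1 := by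
    apply Complex.ofReal_injective
    push_cast
    linear_combination hode
  have hx0 : x ≠ 0 := by
    rintro rfl
    nlinarith
  have hquad : x ^ 2 + x + 1 ≠ 0 := by nlinarith
  have hx1 : x - 1 = 0 := by simpa [hx0, hquad] using hx4
  rw [hx, sub_eq_zero.mp hx1, Complex.ofReal_one]

theorem weierstrassP_div_six (hL : ∀ l ∈ L.lattice, conj l ∈ L.lattice) (hg₂ : L.g₂ = 0)
    (hg₃ : L.g₃ = 1) (hω : (ω : ℂ) ∈ L.lattice) (hω2 : (ω / 2 : ℂ) ∉ L.lattice)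
    (hω3 : (ω / 3 : ℂ) ∉ L.lattice) :
    ℘[L] (ω / 6) = ((1 + 2 ^ ((1 : ℝ) / 3) + 4 ^ ((1 : ℝ) / 3) : ℝ) : ℂ) := by
  have hdouble : 2 * (ω / 6 : ℂ) = ω / 3 := by ring
  have hω6 : (ω / 6 : ℂ) ∉ L.lattice := fun h ↦ hω3 (hdouble ▸ two_mul (ω / 6 : ℂ) ▸ add_mem h h)
  have hthird := weierstrassP_div_three hL hg₂ hg₃ hω hω3
  have hquartic := weierstrassP_two_mul (hdouble ▸ hω3)
  rw [L.derivWeierstrassP_sq _ hω6, hdouble, hthird, hg₂, hg₃] at hquartic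
  have hne : ℘[L] (ω / 6) ≠ 1 := fun h ↦ by
    have hode := L.derivWeierstrassP_sq _ hω3
    rw [derivWeierstrassP_eq_zero_of_weierstrassP_eq hω3 hω6
      (by convert hω2 using 2; ring) (by convert hω6 using 2; ring) (hthird.trans h.symm),
      hthird, hg₂, hg₃] at hode
    norm_num at hode
  obtain ⟨a, ha⟩ := exists_ofReal_eq_weierstrassP hL (ω / 6)
  push_cast at ha
  rw [ha] at hquartic hne ⊢
  have hfactor : (a - 1) * (a ^ 3 - 3 * a ^ 2 - 3 * a - 1) = 0 := by
    apply Complex.ofReal_injective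
    push_cast
    linear_combination hquartic / 4
  have hcubic := (mul_eq_zero.mp hfactor).resolve_left (sub_ne_zero.mpr (mod_cast hne))
  rw [eq_one_add_rpow_add_rpow (a := a) (by linear_combination hcubic)]

end RealPeriod

section EisensteinIntegers

lemma tau_im : tau.im = Real.sqrt 3 / 2 := by
  simp [tau]

lemma tau_sq : tau ^ 2 = -1 - tau := by
  have h : ((Real.sqrt 3 : ℝ) : ℂ) ^ 2 = 3 := by
    rw [← Complex.ofReal_pow, Real.sq_sqrt zero_le_three, Complex.ofReal_ofNat]
  rw [tau]
  linear_combination (Complex.I ^ 2 / 4) * h + (3 / 4) * Complex.I_sq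

lemma tau_pow_three : tau ^ 3 = 1 := by
  linear_combination (tau - 1) * tau_sq

lemma tau_ne_one : tau ≠ 1 := fun h ↦
  (by positivity : Real.sqrt 3 / 2 ≠ 0) (by rw [← tau_im, h, Complex.one_im])

lemma conj_tau : conj tau = -1 - tau := by
  simp only [tau, map_div₀, map_add, map_neg, map_one, map_mul, Complex.conj_ofReal, Complex.conj_I,
    map_ofNat]
  ring

lemma mem_Eis_iff {z : ℂ} : z ∈ Eis ↔ ∃ m n : ℤ, z = m + n * tau := by
  constructor
  · intro h
    induction h using Subring.closure_induction with
    | mem x hx => exact ⟨0, 1, by simpa using hx⟩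
    | zero => exact ⟨0, 0, by simp⟩
    | one => exact ⟨1, 0, by simp⟩
    | add x y _ _ hx hy =>
      obtain ⟨⟨m, n, rfl⟩, a, b, rfl⟩ := And.intro hx hy
      exact ⟨m + a, n + b, by push_cast; ring⟩
    | neg x _ hx =>
      obtain ⟨m, n, rfl⟩ := hx
      exact ⟨-m, -n, by push_cast; ring⟩
    | mul x y _ _ hx hy =>
      obtain ⟨⟨m, n, rfl⟩, a, b, rfl⟩ := And.intro hx hy
      exact ⟨m * a - n * b, m * b + n * a - n * b, by
        push_cast; linear_combination (n * b : ℂ) * tau_sq⟩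
  · rintro ⟨m, n, rfl⟩
    exact add_mem (intCast_mem _ _) (mul_mem (intCast_mem _ _) tauO.2)

lemma conj_mem_Eis {z : ℂ} (hz : z ∈ Eis) : conj z ∈ Eis := by
  obtain ⟨m, n, rfl⟩ := mem_Eis_iff.mp hz
  refine mem_Eis_iff.mpr ⟨m - n, -n, ?_⟩
  simp only [map_add, map_mul, map_intCast, conj_tau]
  push_cast
  ring

variable {ω : ℝ} {z : ℂ}

lemma inLattice.conj (hz : inLattice ω z) : inLattice ω (conj z) := by
  obtain ⟨a, rfl⟩ := hz
  exact ⟨⟨conj a, conj_mem_Eis a.2⟩, by simp⟩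

lemma inLattice.tau_mul (hz : inLattice ω z) : inLattice ω (tau * z) := by
  obtain ⟨a, rfl⟩ := hz
  exact ⟨tauO * a, mul_left_comm _ _ _⟩

lemma inLattice_tau_mul_iff : inLattice ω (tau * z) ↔ inLattice ω z := by
  refine ⟨fun h ↦ ?_, inLattice.tau_mul⟩
  have hz : tau * (tau * (tau * z)) = z := by linear_combination z * tau_pow_three
  exact hz ▸ h.tau_mul.tau_mul

end EisensteinIntegers

section EisensteinLattice
open scoped PeriodPair

variable {ω : ℝ} (hω : ω ≠ 0)

/-- The periods `ω` and `ωτ`, a basis of the lattice `L_ω = ω·ℤ[τ]`, which makes the theory of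
`PeriodPair` available for `wp ω`. -/
def eisensteinPeriodPair (ω : ℝ) (hω : ω ≠ 0) : PeriodPair where
  ω₁ := ω
  ω₂ := ω * tau
  indep := by
    refine LinearIndependent.pair_iff.mpr fun s t h ↦ ?_
    have ht : t = 0 := by simpa [tau_im, hω] using congrArg Complex.im h
    exact ⟨by simpa [ht, hω] using congrArg Complex.re h, ht⟩

lemma mem_lattice_eisensteinPeriodPair {z : ℂ} :
    z ∈ (eisensteinPeriodPair ω hω).lattice ↔ inLattice ω z := by
  rw [PeriodPair.mem_lattice]
  constructor
  · rintro ⟨m, n, rfl⟩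
    exact ⟨⟨m + n * tau, mem_Eis_iff.mpr ⟨m, n, rfl⟩⟩, by simp only [eisensteinPeriodPair]; ring⟩
  · rintro ⟨⟨a, ha⟩, rfl⟩
    obtain ⟨m, n, rfl⟩ := mem_Eis_iff.mp ha
    exact ⟨m, n, by simp only [eisensteinPeriodPair]; ring⟩

lemma wp_eq_weierstrassP : wp ω = ℘[eisensteinPeriodPair ω hω] := by
  funext z
  rw [weierstrassP_eq_inv_sq_add, wp, PeriodPair.weierstrassPExcept]
  congr 1
  have hwp := tsum_subtype {l : ℂ | inLattice ω l ∧ l ≠ 0}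
    (fun l ↦ 1 / (z - l) ^ 2 - 1 / l ^ 2)
  have hL := tsum_subtype ((eisensteinPeriodPair ω hω).lattice : Set ℂ)
    (fun l ↦ if l = 0 then 0 else 1 / (z - l) ^ 2 - 1 / l ^ 2)
  refine hwp.trans (Eq.trans (tsum_congr fun l ↦ ?_) hL.symm)
  have hmem := mem_lattice_eisensteinPeriodPair hω (z := l)
  by_cases h0 : l = 0 <;> by_cases hl : inLattice ω l <;> simp [Set.indicator, hmem, h0, hl]

lemma g₂_eisensteinPeriodPair : (eisensteinPeriodPair ω hω).g₂ = 0 := by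
  have hG : (eisensteinPeriodPair ω hω).G 4 = 0 := by
    refine G_eq_zero_of_mul_mem_lattice_iff (ζ := tau) (fun l ↦ ?_) ?_
    · simp only [mem_lattice_eisensteinPeriodPair, inLattice_tau_mul_iff]
    · rw [pow_succ, tau_pow_three, one_mul]
      exact tau_ne_one
  rw [PeriodPair.g₂, hG, mul_zero]

end EisensteinLattice

theorem wp_value_at_one_sixth_general {ω : ℝ} (hω : ω ≠ 0) {z : ℂ} (hz : ¬ inLattice ω z)
    (hODE : deriv (wp ω) z ^ 2 = 4 * wp ω z ^ 3 - 1) :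
    wp ω ((ω : ℂ) / 6) = 1 + cbrt2 + cbrt4 := by
  set L := eisensteinPeriodPair ω hω
  have hg₂ : L.g₂ = 0 := g₂_eisensteinPeriodPair hω
  have hg₃ : L.g₃ = 1 := by
    rw [wp_eq_weierstrassP hω, L.deriv_weierstrassP, L.derivWeierstrassP_sq z
      (mt (mem_lattice_eisensteinPeriodPair hω).mp hz), hg₂] at hODE
    linear_combination -hODE
  have hconj (l : ℂ) (hl : l ∈ L.lattice) : conj l ∈ L.lattice := by
    rw [mem_lattice_eisensteinPeriodPair] at hl ⊢
    exact hl.conj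
  rw [wp_eq_weierstrassP hω, weierstrassP_div_six hconj hg₂ hg₃ L.ω₁_mem_lattice
    L.ω₁_div_two_notMem_lattice (ω₁_div_natCast_notMem_lattice L (n := 3) (by norm_num)),
    cbrt2, cbrt4]
  push_cast
  rfl

/-- From [Qiu], (2.11): `℘(ω/6) = 1 + ∛2 + ∛4`.
Here `ω > 0` is pinned down by the differential equation `℘′² = 4℘³ − 1` for the
lattice `L_ω = ω·ℤ[τ]` (equivalently, the lattice invariants are `g₂ = 0`, `g₃ = 1`). -/
theorem wp_value_at_one_sixth
    (ω : ℝ) (hω : 0 < ω)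
    (hODE : ∀ z : ℂ, ¬ inLattice ω z → deriv (wp ω) z ^ 2 = 4 * wp ω z ^ 3 - 1) :
    wp ω ((ω : ℂ) / 6) = 1 + cbrt2 + cbrt4 := by
  have hhalf : ¬ inLattice ω (ω / 2) := fun h ↦ PeriodPair.ω₁_div_two_notMem_lattice _
    ((mem_lattice_eisensteinPeriodPair hω.ne').mpr h)
  exact wp_value_at_one_sixth_general hω.ne' hhalf (hODE _ hhalf)
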